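/- Let α > −1, n ≥ 0, and let p_n be a polynomial of degree n orthogonal to Π^d_{n−1} with respect to the Sobolev inner product ⟨u,v⟩_{α,1} = ⟨∇u,∇v⟩_α + ⟨S^α_0 u, S^α_0 v⟩_α. Then for every k ∈ {1,...,d}, the partial derivative ∂_k p_n lies in 𝒱^α_{n−1}, the space of polynomials of degree n−1 that are L²(B^d, (1−‖x‖²)^α)-orthogonal to Π^d_{n−2}. -/

import Mathlib

/-!
Write `⟨·,·⟩` for `lebIP α`, and suppose `n = m + 2` (for smaller `n` only the degree bound has
content). Let `s_k` be the orthogonal projection of `∂_k p` onto the polynomials of degree at most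
`m`, and `r_k = ∂_k p - s_k`. The theorem says that every `s_k` vanishes.

*The field `s` is a gradient.* Put `c = ∂_j s_k - ∂_k s_j = ∂_k r_j - ∂_j r_k`, of degree at most
`m - 1`. Integration by parts (`wInt_pderiv`) gives
`∫ (∂_i r_l) c (1 - ‖x‖²)^{α+1} = -∫ r_l (adj α i c) (1 - ‖x‖²)^α`, where `adj α i` raises the
degree by at most one; the right side is zero because `r_l` is orthogonal to degree `≤ m`.
Hence `∫ c² (1 - ‖x‖²)^{α+1} = 0` and `c = 0` (`curl_proj`). By the Poincaré lemma for polynomials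
(`exists_potential`), `s = ∇σ` with `σ` of degree at most `m + 1 < n`.

*Conclusion.* Testing the Sobolev orthogonality of `p` with `1` gives `⟨p, 1⟩ = 0`, and then testing
with `σ` gives `0 = ∑ ⟨∂_k p, s_k⟩ = ∑ ⟨s_k, s_k⟩`, so every `s_k` is zero.

The analytic input is `integral_adj`: the integral over the ball of
`∂_j ((1 - ‖x‖²)^{α+1} P)` vanishes. For `α ≤ 0` the function extended by zero is not `C¹` across
the sphere, but on each line parallel to the `j`-th axis it is continuous and differentiable off at
most two points, which suffices for the fundamental theorem of calculus.
-/

open MeasureTheory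

/-- The weighted Lebesgue inner product
`⟨p,q⟩_β = ∫_{B^d} p(x) q(x) (1−‖x‖²)^β dx` of two polynomials. -/
noncomputable def lebIP {d : ℕ} (β : ℝ) (p q : MvPolynomial (Fin d) ℝ) : ℝ :=
  ∫ x in Metric.ball (0 : EuclideanSpace ℝ (Fin d)) 1,
    MvPolynomial.eval (fun t => x t) p * MvPolynomial.eval (fun t => x t) q *
      (1 - ‖x‖ ^ 2) ^ β

/-- The Sobolev inner product
`⟨p,q⟩_{α,1} = ⟨∇p,∇q⟩_α + ⟨S^α_0 p, S^α_0 q⟩_α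
             = ⟨∇p,∇q⟩_α + ⟨p,1⟩_α ⟨q,1⟩_α / ⟨1,1⟩_α`. -/
noncomputable def sobIP {d : ℕ} (α : ℝ) (p q : MvPolynomial (Fin d) ℝ) : ℝ :=
  (∑ i : Fin d, lebIP α (MvPolynomial.pderiv i p) (MvPolynomial.pderiv i q))
    + lebIP α p 1 * lebIP α q 1 / lebIP α (1 : MvPolynomial (Fin d) ℝ) 1

/-! ### Integration by parts on the ball -/

open MvPolynomial in
lemma hasDerivAt_eval_line {d : ℕ} (j : Fin d) (P : MvPolynomial (Fin d) ℝ)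
    (x : EuclideanSpace ℝ (Fin d)) (s : ℝ) :
    HasDerivAt (fun s : ℝ => eval (fun t => (x + s • EuclideanSpace.single j (1 : ℝ)) t) P)
      (eval (fun t => (x + s • EuclideanSpace.single j (1 : ℝ)) t) (pderiv j P)) s := by
  induction P using MvPolynomial.induction_on with
  | C a => simpa using hasDerivAt_const s a
  | add p q hp hq => simpa only [map_add] using hp.fun_add hq
  | mul_X p i hp =>
    have hX : HasDerivAt
        (fun s : ℝ => eval (fun t => (x + s • EuclideanSpace.single j (1 : ℝ)) t) (X i))
        (eval (fun t => (x + s • EuclideanSpace.single j (1 : ℝ)) t)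
          (pderiv j (X i : MvPolynomial (Fin d) ℝ))) s := by
      by_cases h : i = j
      · subst h
        simpa using (hasDerivAt_id s).const_add (x i)
      · simpa [h, pderiv_X] using hasDerivAt_const s (x i)
    have := hp.fun_mul hX
    rw [pderiv_mul, map_add, map_mul, map_mul]
    simpa only [map_mul] using this

/-- Let `f` be integrable, continuous on every line of direction `e`, and with derivative `F` along
that line off a countable set. If `F` is integrable then `∫ F = 0`: integrate
`f (x + e) - f x = ∫₀¹ F (x + s e) ds` over `x`, swap the integrals and use translation
invariance. -/
lemma integral_eq_zero_of_lineDeriv {d : ℕ} (f F : EuclideanSpace ℝ (Fin d) → ℝ)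
    (e : EuclideanSpace ℝ (Fin d)) (hf : Integrable f) (hF : Integrable F) (hFm : Measurable F)
    (hcont : ∀ x, Continuous fun s : ℝ => f (x + s • e))
    (hder : ∀ x, ∃ S : Set ℝ, S.Countable ∧
      ∀ s ∉ S, HasDerivAt (fun s : ℝ => f (x + s • e)) (F (x + s • e)) s) :
    ∫ x, F x = 0 := by
  have hint : Integrable (Function.uncurry fun (s : ℝ) x => F (x + s • e))
      ((volume.restrict (Set.uIoc (0 : ℝ) 1)).prod volume) := by
    rw [integrable_prod_iff]
    · refine ⟨.of_forall fun s => ?_, ?_⟩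
      · exact hF.comp_add_right (s • e)
      · simp only [Function.uncurry]
        have : ∀ s : ℝ, ∫ y, ‖F (y + s • e)‖ = ∫ y, ‖F y‖ := fun s =>
          integral_add_right_eq_self (fun y => ‖F y‖) (s • e)
        simp only [this]
        have : IsFiniteMeasure (volume.restrict (Set.uIoc (0 : ℝ) 1)) := by
          rw [Set.uIoc_of_le zero_le_one]; infer_instance
        exact integrable_const _
    · refine (hFm.comp ?_).aestronglyMeasurable
      fun_prop
  have hswap := intervalIntegral_integral_swap (μ := volume) hint
  have h1 : ∀ s : ℝ, ∫ x, F (x + s • e) = ∫ x, F x := fun s =>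
    integral_add_right_eq_self F (s • e)
  have h2 : ∀ᵐ x : EuclideanSpace ℝ (Fin d),
      ∫ s in (0 : ℝ)..1, F (x + s • e) = f (x + e) - f x := by
    filter_upwards [hint.prod_left_ae] with x hx
    obtain ⟨S, hS, hd⟩ := hder x
    have := MeasureTheory.integral_eq_of_hasDerivAt_off_countable
      (fun s : ℝ => f (x + s • e)) (fun s : ℝ => F (x + s • e)) (a := 0) (b := 1) hS
      (hcont x).continuousOn (fun s hs => hd s hs.2) (by
        rw [intervalIntegrable_iff]; exact hx)
    simpa using this
  simp only [h1] at hswap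
  rw [integral_congr_ae h2, integral_sub (hf.comp_add_right e) hf,
    integral_add_right_eq_self f e] at hswap
  simpa using hswap

/-- In polar coordinates this is the integrability of `r^{d-1} (1 - r)^α (1 + r)^α` on `(0, 1)`. -/
lemma integrableOn_weight {d : ℕ} (hd : 1 ≤ d) {α : ℝ} (hα : -1 < α) :
    IntegrableOn (fun x : EuclideanSpace ℝ (Fin d) => (1 - ‖x‖ ^ 2) ^ α) (Metric.ball 0 1) := by
  have : Nonempty (Fin d) := ⟨⟨0, hd⟩⟩
  have : Nontrivial (EuclideanSpace ℝ (Fin d)) := inferInstance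
  rw [integrableOn_fun_norm_addHaar volume (f := fun r : ℝ => (1 - r ^ 2) ^ α)]
  have h1 : IntervalIntegrable (fun r : ℝ => (1 - r) ^ α) volume 0 1 := by
    simpa using
      (intervalIntegral.intervalIntegrable_rpow' (a := 1) (b := 0) hα).comp_sub_left 1
  have h2 : IntervalIntegrable
      (fun r : ℝ => (1 - r) ^ α * (r ^ (Module.finrank ℝ (EuclideanSpace ℝ (Fin d)) - 1) *
        (1 + r) ^ α)) volume 0 1 := by
    refine h1.mul_continuousOn ?_
    refine ContinuousOn.mul (by fun_prop) ?_
    refine ContinuousOn.rpow_const (by fun_prop) fun r hr => Or.inl ?_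
    rw [Set.uIcc_of_le zero_le_one] at hr
    linarith [hr.1]
  rw [intervalIntegrable_iff_integrableOn_Ioo_of_le zero_le_one] at h2
  refine h2.congr_fun (fun r hr => ?_) measurableSet_Ioo
  have : (1 - r ^ 2 : ℝ) = (1 - r) * (1 + r) := by ring
  simp only [smul_eq_mul]
  rw [this, Real.mul_rpow (by linarith [hr.2]) (by linarith [hr.1])]
  ring

lemma continuous_evalE {d : ℕ} (P : MvPolynomial (Fin d) ℝ) :
    Continuous fun x : EuclideanSpace ℝ (Fin d) => MvPolynomial.eval (fun t => x t) P :=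
  (MvPolynomial.continuous_eval P).comp (by fun_prop)

lemma integrableOn_eval_mul_weight {d : ℕ} (hd : 1 ≤ d) {α : ℝ} (hα : -1 < α)
    (P : MvPolynomial (Fin d) ℝ) :
    IntegrableOn (fun x : EuclideanSpace ℝ (Fin d) =>
      MvPolynomial.eval (fun t => x t) P * (1 - ‖x‖ ^ 2) ^ α) (Metric.ball 0 1) := by
  obtain ⟨C, hC⟩ :=
    (isCompact_closedBall (0 : EuclideanSpace ℝ (Fin d)) 1).exists_bound_of_continuousOn
    (continuous_evalE P).continuousOn
  refine Integrable.bdd_mul (c := C) (integrableOn_weight hd hα)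
    (continuous_evalE P).aestronglyMeasurable ?_
  filter_upwards [ae_restrict_mem Metric.isOpen_ball.measurableSet] with x hx
  exact hC x (Metric.ball_subset_closedBall hx)

/-- The polynomial `1 - ‖x‖²`. -/
noncomputable def ballPoly (d : ℕ) : MvPolynomial (Fin d) ℝ :=
  1 - ∑ i, MvPolynomial.X i ^ 2

lemma eval_ballPoly {d : ℕ} (x : EuclideanSpace ℝ (Fin d)) :
    MvPolynomial.eval (fun t => x t) (ballPoly d) = 1 - ‖x‖ ^ 2 := by
  simp [ballPoly, EuclideanSpace.real_norm_sq_eq]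

lemma pderiv_ballPoly {d : ℕ} (j : Fin d) :
    MvPolynomial.pderiv j (ballPoly d) = MvPolynomial.C (-2) * MvPolynomial.X j := by
  classical
  have h2 : (MvPolynomial.C 2 : MvPolynomial (Fin d) ℝ) = 2 := map_ofNat _ 2
  simp [ballPoly, MvPolynomial.pderiv_X, Pi.single_apply, h2]

/-- The polynomial `(1 - ‖x‖²)^{-α} ∂_j ((1 - ‖x‖²)^{α+1} P)`, written out: up to sign, the adjoint
of `∂_j` from the weight `α` to the weight `α + 1`. -/
noncomputable def adj {d : ℕ} (α : ℝ) (j : Fin d) (P : MvPolynomial (Fin d) ℝ) :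
    MvPolynomial (Fin d) ℝ :=
  ballPoly d * MvPolynomial.pderiv j P - MvPolynomial.C (2 * (α + 1)) * (MvPolynomial.X j * P)

lemma countable_sphere_line {d : ℕ} (j : Fin d) (x : EuclideanSpace ℝ (Fin d)) :
    {s : ℝ | 1 - ‖x + s • EuclideanSpace.single j (1 : ℝ)‖ ^ 2 = 0}.Countable := by
  -- The points of the line on the sphere are the roots of `(s + x j) ^ 2 = D`.
  set D : ℝ := 1 - ‖x‖ ^ 2 + x j ^ 2 with hD
  refine Set.Countable.mono (s₂ := {√D - x j, -√D - x j}) ?_ (Set.toFinite _).countable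
  intro s hs
  have h : ‖x + s • EuclideanSpace.single j (1 : ℝ)‖ ^ 2 = ‖x‖ ^ 2 + 2 * (s * x j) + s ^ 2 := by
    rw [norm_add_sq_real, inner_smul_right, EuclideanSpace.inner_single_right, norm_smul]
    simp
  have hs' : (s + x j) ^ 2 = D := by
    have : 1 - ‖x + s • EuclideanSpace.single j (1 : ℝ)‖ ^ 2 = 0 := hs
    rw [h] at this
    rw [hD]; linarith
  have hq : √D = |s + x j| := by rw [← hs', Real.sqrt_sq_eq_abs]
  rcases abs_choice (s + x j) with h' | h'
  · left; rw [hq, h']; ring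
  · right; rw [Set.mem_singleton_iff, hq, h']; ring

open MvPolynomial in
/-- The divergence theorem on the ball for `(1 - ‖x‖²)^{α+1} P` in the direction `j`; the boundary
term vanishes because `α + 1 > 0`. -/
lemma integral_adj {d : ℕ} (hd : 1 ≤ d) {α : ℝ} (hα : -1 < α) (j : Fin d)
    (P : MvPolynomial (Fin d) ℝ) :
    ∫ x in Metric.ball (0 : EuclideanSpace ℝ (Fin d)) 1,
      eval (fun t => x t) (adj α j P) * (1 - ‖x‖ ^ 2) ^ α = 0 := by
  have hball : MeasurableSet (Metric.ball (0 : EuclideanSpace ℝ (Fin d)) 1) :=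
    Metric.isOpen_ball.measurableSet
  have hα1 : 0 < α + 1 := by linarith
  have mem_ball : ∀ x : EuclideanSpace ℝ (Fin d),
      x ∈ Metric.ball (0 : EuclideanSpace ℝ (Fin d)) 1 ↔ 0 < 1 - ‖x‖ ^ 2 := fun x => by
    rw [mem_ball_zero_iff, sub_pos, sq_lt_one_iff₀ (norm_nonneg x)]
  rw [← integral_indicator hball]
  have hcont : Continuous fun x : EuclideanSpace ℝ (Fin d) =>
      eval (fun t => x t) P * (max (1 - ‖x‖ ^ 2) 0) ^ (α + 1) := by
    refine (continuous_evalE P).mul ?_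
    exact Continuous.rpow_const (by fun_prop) fun x => Or.inr hα1.le
  -- The truncation by `max` makes the function continuous on the whole space, vanishing off the ball.
  refine integral_eq_zero_of_lineDeriv
    (fun x => eval (fun t => x t) P * (max (1 - ‖x‖ ^ 2) 0) ^ (α + 1)) _
    (EuclideanSpace.single j (1 : ℝ)) ?_ ?_ ?_ ?_ ?_
  · refine hcont.integrable_of_hasCompactSupport ?_
    refine HasCompactSupport.intro (isCompact_closedBall (0 : EuclideanSpace ℝ (Fin d)) 1) ?_
    intro x hx
    have : 1 - ‖x‖ ^ 2 ≤ 0 := by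
      rw [mem_closedBall_zero_iff, not_le] at hx
      nlinarith
    rw [max_eq_right this, Real.zero_rpow hα1.ne', mul_zero]
  · exact (integrable_indicator_iff hball).2 (integrableOn_eval_mul_weight hd hα _)
  · refine Measurable.indicator ?_ hball
    refine (continuous_evalE _).measurable.mul ?_
    exact Measurable.pow_const (by fun_prop) α
  · intro x
    exact hcont.comp (by fun_prop)
  · intro x
    refine ⟨_, countable_sphere_line j x, fun s hs => ?_⟩
    have hP := hasDerivAt_eval_line j P x s
    have hN := hasDerivAt_eval_line j (ballPoly d) x s
    simp only [eval_ballPoly, pderiv_ballPoly] at hN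
    have hs0 : 1 - ‖x + s • EuclideanSpace.single j (1 : ℝ)‖ ^ 2 ≠ 0 := hs
    rcases lt_or_gt_of_ne hs0 with hneg | hpos
    · rw [Set.indicator_of_notMem (fun h => hneg.not_gt ((mem_ball _).1 h))]
      refine (hasDerivAt_const s (0 : ℝ)).congr_of_eventuallyEq ?_
      filter_upwards [hN.continuousAt.eventually_lt continuousAt_const hneg] with r hr
      rw [max_eq_right hr.le, Real.zero_rpow hα1.ne', mul_zero]
    · rw [Set.indicator_of_mem ((mem_ball _).2 hpos)]
      have := hP.fun_mul (hN.rpow_const (p := α + 1) (Or.inl hpos.ne'))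
      refine (this.congr_of_eventuallyEq ?_).congr_deriv ?_
      · filter_upwards [continuousAt_const.eventually_lt hN.continuousAt hpos] with r hr
        rw [max_eq_left hr.le]
      · rw [Real.rpow_add_one hpos.ne', add_sub_cancel_right]
        simp only [adj, map_sub, map_mul, eval_ballPoly, eval_C, eval_X]
        ring

/-! ### Positivity of the weighted integral -/

open MvPolynomial in
/-- The ball contains a product of intervals, on which a nonzero polynomial cannot vanish. -/
lemma eq_zero_of_eval_ball {d : ℕ} (P : MvPolynomial (Fin d) ℝ)
    (h : ∀ x ∈ Metric.ball (0 : EuclideanSpace ℝ (Fin d)) 1, eval (fun t => x t) P = 0) :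
    P = 0 := by
  have hd0 : (0 : ℝ) < 1 / (d + 1) := by positivity
  refine funext_set (fun _ => Set.Ioo (0 : ℝ) (1 / (d + 1))) (fun _ => Set.Ioo_infinite hd0) ?_
  intro y hy
  have := h (WithLp.toLp 2 y) (by
    rw [mem_ball_zero_iff, ← sq_lt_one_iff₀ (norm_nonneg _), EuclideanSpace.real_norm_sq_eq]
    calc ∑ i, y i ^ 2 ≤ ∑ i : Fin d, (1 / (d + 1) : ℝ) := by
          refine Finset.sum_le_sum fun i _ => ?_
          have hi := hy i trivial
          have h1 : (1 / (d + 1) : ℝ) ≤ 1 := by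
            rw [div_le_one (by positivity)]; linarith [(Nat.cast_nonneg d : (0 : ℝ) ≤ d)]
          nlinarith [hi.1, hi.2]
      _ = d / (d + 1) := by simp [div_eq_mul_inv]
      _ < 1 := by rw [div_lt_one (by positivity)]; linarith)
  simpa using this

open MvPolynomial in
lemma eq_zero_of_integral_eq_zero {d : ℕ} (hd : 1 ≤ d) {α : ℝ} (hα : -1 < α)
    (P : MvPolynomial (Fin d) ℝ)
    (hP : ∀ x ∈ Metric.ball (0 : EuclideanSpace ℝ (Fin d)) 1, 0 ≤ eval (fun t => x t) P)
    (h : ∫ x in Metric.ball (0 : EuclideanSpace ℝ (Fin d)) 1,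
      eval (fun t => x t) P * (1 - ‖x‖ ^ 2) ^ α = 0) : P = 0 := by
  have hpos : ∀ x ∈ Metric.ball (0 : EuclideanSpace ℝ (Fin d)) 1, 0 < 1 - ‖x‖ ^ 2 :=
    fun x hx => by
      rwa [sub_pos, sq_lt_one_iff₀ (norm_nonneg x), ← mem_ball_zero_iff]
  rw [setIntegral_eq_zero_iff_of_nonneg_ae ?_ (integrableOn_eval_mul_weight hd hα P)] at h
  · have := Measure.eqOn_open_of_ae_eq h Metric.isOpen_ball
      ((continuous_evalE P).continuousOn.mul
        (ContinuousOn.rpow_const (by fun_prop) fun x hx => Or.inl (hpos x hx).ne'))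
      continuousOn_const
    refine eq_zero_of_eval_ball P fun x hx => ?_
    exact (mul_eq_zero.1 (this hx)).resolve_right (Real.rpow_pos_of_pos (hpos x hx) _).ne'
  · filter_upwards [ae_restrict_mem Metric.isOpen_ball.measurableSet] with x hx
    exact mul_nonneg (hP x hx) (Real.rpow_nonneg (hpos x hx).le _)

/-! ### The weighted integral as a linear functional -/

/-- The functional `P ↦ ∫_{B^d} P (1 - ‖x‖²)^α`, linear because `-1 < α` makes every integrand
integrable. -/
noncomputable def wInt {d : ℕ} (hd : 1 ≤ d) {α : ℝ} (hα : -1 < α) :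
    MvPolynomial (Fin d) ℝ →ₗ[ℝ] ℝ where
  toFun P := ∫ x in Metric.ball (0 : EuclideanSpace ℝ (Fin d)) 1,
    MvPolynomial.eval (fun t => x t) P * (1 - ‖x‖ ^ 2) ^ α
  map_add' P Q := by
    simp only [map_add, add_mul]
    exact integral_add (integrableOn_eval_mul_weight hd hα P)
      (integrableOn_eval_mul_weight hd hα Q)
  map_smul' c P := by
    simp only [MvPolynomial.smul_eval, mul_assoc, RingHom.id_apply, smul_eq_mul]
    exact integral_const_mul c _

lemma lebIP_eq_wInt {d : ℕ} (hd : 1 ≤ d) {α : ℝ} (hα : -1 < α) (p q : MvPolynomial (Fin d) ℝ) :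
    lebIP α p q = wInt hd hα (p * q) := by
  simp [lebIP, wInt]

lemma wInt_adj {d : ℕ} (hd : 1 ≤ d) {α : ℝ} (hα : -1 < α) (j : Fin d)
    (P : MvPolynomial (Fin d) ℝ) : wInt hd hα (adj α j P) = 0 :=
  integral_adj hd hα j P

lemma eq_zero_of_wInt_sq {d : ℕ} (hd : 1 ≤ d) {α : ℝ} (hα : -1 < α)
    (P : MvPolynomial (Fin d) ℝ) (h : wInt hd hα (P * P) = 0) : P = 0 :=
  mul_self_eq_zero.1 <| eq_zero_of_integral_eq_zero hd hα (P * P)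
    (fun x _ => by rw [map_mul]; exact mul_self_nonneg _) h

lemma eq_zero_of_wInt_ballPoly_mul_sq {d : ℕ} (hd : 1 ≤ d) {α : ℝ} (hα : -1 < α)
    (P : MvPolynomial (Fin d) ℝ) (h : wInt hd hα (ballPoly d * (P * P)) = 0) : P = 0 := by
  have h0 := eq_zero_of_integral_eq_zero hd hα (ballPoly d * (P * P)) (fun x hx => by
    rw [map_mul, map_mul, eval_ballPoly]
    rw [mem_ball_zero_iff] at hx
    exact mul_nonneg (by nlinarith [norm_nonneg x]) (mul_self_nonneg _)) h
  have hN : ballPoly d ≠ 0 := fun hN => by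
    have := eval_ballPoly (0 : EuclideanSpace ℝ (Fin d))
    rw [hN] at this
    simp at this
  exact mul_self_eq_zero.1 ((mul_eq_zero.1 h0).resolve_left hN)

/-- Orthogonal projection onto the polynomials of degree at most `m`. -/
lemma exists_proj {d : ℕ} (hd : 1 ≤ d) {α : ℝ} (hα : -1 < α) (m : ℕ)
    (p : MvPolynomial (Fin d) ℝ) :
    ∃ s : MvPolynomial (Fin d) ℝ, s.totalDegree ≤ m ∧
      ∀ q : MvPolynomial (Fin d) ℝ, q.totalDegree ≤ m → wInt hd hα (p * q) = wInt hd hα (s * q) := by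
  let V := MvPolynomial.restrictTotalDegree (Fin d) ℝ m
  let B : MvPolynomial (Fin d) ℝ →ₗ[ℝ] Module.Dual ℝ V :=
    (LinearMap.mul ℝ (MvPolynomial (Fin d) ℝ)).compr₂ (wInt hd hα) |>.compl₂ V.subtype
  -- Positive definiteness makes the Gram map `V → V*` injective, hence onto in finite dimension.
  have hinj : Function.Injective (B ∘ₗ V.subtype) := by
    rw [injective_iff_map_eq_zero]
    intro u hu
    have := congrArg (fun f => f u) hu
    exact Subtype.ext (eq_zero_of_wInt_sq hd hα _ this)
  have hsurj := (LinearMap.injective_iff_surjective_of_finrank_eq_finrank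
    (Subspace.dual_finrank_eq (K := ℝ) (V := V)).symm).1 hinj
  obtain ⟨s, hs⟩ := hsurj (B p)
  refine ⟨s, (MvPolynomial.mem_restrictTotalDegree _ _ _).1 s.2, fun q hq => ?_⟩
  exact (congrArg (fun f => f ⟨q, (MvPolynomial.mem_restrictTotalDegree _ _ _).2 hq⟩) hs).symm

/-! ### Degrees, derivatives and potentials of polynomials -/

open MvPolynomial

lemma totalDegree_pderiv_lt {d : ℕ} (j : Fin d) (p : MvPolynomial (Fin d) ℝ)
    (h : pderiv j p ≠ 0) : (pderiv j p).totalDegree < p.totalDegree := by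
  obtain ⟨m, hm, hdeg⟩ := Finset.exists_mem_eq_sup _ (support_nonempty.2 h)
    (fun s => s.sum fun _ e => e)
  have hm' : m + Finsupp.single j 1 ∈ p.support := by
    rw [mem_support_iff] at hm ⊢
    rw [coeff_pderiv] at hm
    exact left_ne_zero_of_mul hm
  have := le_totalDegree hm'
  rw [Finsupp.sum_add_index' (fun _ => rfl) (fun _ _ _ => rfl), Finsupp.sum_single_index rfl] at this
  exact Nat.lt_of_lt_of_le (hdeg.trans_lt (Nat.lt_succ_self _)) this

lemma totalDegree_pderiv_le {d : ℕ} (j : Fin d) (p : MvPolynomial (Fin d) ℝ) :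
    (pderiv j p).totalDegree ≤ p.totalDegree - 1 := by
  by_cases h : pderiv j p = 0
  · simp [h]
  · exact Nat.le_sub_one_of_lt (totalDegree_pderiv_lt j p h)

lemma homogeneousComponent_pderiv {d : ℕ} (j : Fin d) (i : ℕ) (p : MvPolynomial (Fin d) ℝ) :
    homogeneousComponent i (pderiv j p) = pderiv j (homogeneousComponent (i + 1) p) := by
  ext m
  have : (m + Finsupp.single j 1).degree = m.degree + 1 := by simp
  simp only [coeff_homogeneousComponent, coeff_pderiv, this, add_left_inj]
  split_ifs <;> simp

/-- By Euler's identity `(i + 1)⁻¹ ∑ x_k s_k` is a potential of a curl-free field `s` that is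
homogeneous of degree `i`. -/
lemma exists_potential_homogeneous {d : ℕ} (i : ℕ) (s : Fin d → MvPolynomial (Fin d) ℝ)
    (hs : ∀ k, (s k).IsHomogeneous i) (hc : ∀ j k, pderiv j (s k) = pderiv k (s j)) :
    ∃ σ : MvPolynomial (Fin d) ℝ, σ.totalDegree ≤ i + 1 ∧ ∀ k, pderiv k σ = s k := by
  classical
  refine ⟨C ((i + 1 : ℝ)⁻¹) * ∑ k, X k * s k, ?_, fun j => ?_⟩
  · have : (∑ k, X k * s k).IsHomogeneous (1 + i) :=
      IsHomogeneous.sum _ _ _ fun k _ => (isHomogeneous_X ℝ k).mul (hs k)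
    have := ((isHomogeneous_C (Fin d) ((i + 1 : ℝ)⁻¹)).mul this).totalDegree_le
    omega
  · have he := (hs j).sum_X_mul_pderiv
    have : pderiv j (∑ k, X k * s k) = C (i + 1 : ℝ) * s j := by
      simp only [map_sum, pderiv_mul, hc j, Finset.sum_add_distrib, he, pderiv_X, Pi.single_apply,
        ite_mul, one_mul, zero_mul, Finset.sum_ite_eq', Finset.mem_univ, if_true]
      simp only [nsmul_eq_mul, map_add, map_natCast, map_one]
      ring
    rw [pderiv_C_mul, this, ← mul_assoc, ← C_mul, inv_mul_cancel₀ (by positivity), C_1, one_mul]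

/-- Poincaré lemma for polynomials. -/
lemma exists_potential {d : ℕ} (m : ℕ) (s : Fin d → MvPolynomial (Fin d) ℝ)
    (hs : ∀ k, (s k).totalDegree ≤ m) (hc : ∀ j k, pderiv j (s k) = pderiv k (s j)) :
    ∃ σ : MvPolynomial (Fin d) ℝ, σ.totalDegree ≤ m + 1 ∧ ∀ k, pderiv k σ = s k := by
  have hcomp : ∀ i : ℕ, ∃ σ : MvPolynomial (Fin d) ℝ, σ.totalDegree ≤ i + 1 ∧
      ∀ k, pderiv k σ = homogeneousComponent i (s k) := fun i =>
    exists_potential_homogeneous i _ (fun k => homogeneousComponent_isHomogeneous i _) fun j k => by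
      cases i with
      | zero => simp [homogeneousComponent_zero]
      | succ i => rw [← homogeneousComponent_pderiv, hc, homogeneousComponent_pderiv]
  choose σ hσd hσ using hcomp
  refine ⟨∑ i ∈ Finset.range (m + 1), σ i, ?_, fun k => ?_⟩
  · refine totalDegree_finsetSum_le fun i hi => (hσd i).trans ?_
    have := Finset.mem_range.1 hi
    omega
  · rw [map_sum]
    simp only [hσ]
    conv_rhs => rw [← sum_homogeneousComponent (s k)]
    refine (Finset.sum_subset (Finset.range_mono (by have := hs k; omega)) ?_).symm
    intro i _ hi
    refine homogeneousComponent_eq_zero _ _ ?_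
    rw [Finset.mem_range] at hi
    omega

/-! ### Orthogonality of the gradient -/

lemma totalDegree_adj_le {d : ℕ} (α : ℝ) (j : Fin d) (P : MvPolynomial (Fin d) ℝ) :
    (adj α j P).totalDegree ≤ P.totalDegree + 1 := by
  have hN : (ballPoly d).totalDegree ≤ 2 := by
    refine (totalDegree_sub _ _).trans (max_le (by simp) ?_)
    exact totalDegree_finsetSum_le fun i _ => by simp
  refine (totalDegree_sub _ _).trans (max_le ?_ ?_)
  · by_cases h : pderiv j P = 0
    · simp [h]
    · have h1 := totalDegree_mul (ballPoly d) (pderiv j P)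
      have h2 := totalDegree_pderiv_lt j P h
      omega
  · have h1 := totalDegree_mul (C (2 * (α + 1))) (X j * P)
    have h2 := totalDegree_mul (X j) P
    rw [totalDegree_C] at h1
    rw [totalDegree_X] at h2
    omega

/-- Integration by parts in polynomial form. -/
lemma wInt_pderiv {d : ℕ} (hd : 1 ≤ d) {α : ℝ} (hα : -1 < α) (j : Fin d)
    (r c : MvPolynomial (Fin d) ℝ) :
    wInt hd hα (ballPoly d * (pderiv j r * c)) = -wInt hd hα (r * adj α j c) := by
  have h := wInt_adj hd hα j (r * c)
  have h' : adj α j (r * c) = ballPoly d * (pderiv j r * c) + r * adj α j c := by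
    simp only [adj, pderiv_mul]
    ring
  rw [h', map_add] at h
  linarith

lemma pderiv_pderiv_comm {d : ℕ} (j k : Fin d) (p : MvPolynomial (Fin d) ℝ) :
    pderiv j (pderiv k p) = pderiv k (pderiv j p) := by
  classical
  ext m
  simp only [coeff_pderiv]
  rw [add_right_comm]
  by_cases h : j = k
  · subst h; rfl
  · simp [h, Ne.symm h]
    ring

/-- If `s_k` is the orthogonal projection of `∂_k p` onto degree `≤ m`, then `s` has zero curl: the
curl has degree `< m` and is orthogonal to itself for the weight `(1 - ‖x‖²)^{α+1}`. -/
lemma curl_proj {d : ℕ} (hd : 1 ≤ d) {α : ℝ} (hα : -1 < α) (m : ℕ)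
    (p : MvPolynomial (Fin d) ℝ) (s : Fin d → MvPolynomial (Fin d) ℝ)
    (hs : ∀ k, (s k).totalDegree ≤ m)
    (hproj : ∀ k (q : MvPolynomial (Fin d) ℝ), q.totalDegree ≤ m →
      wInt hd hα (pderiv k p * q) = wInt hd hα (s k * q)) (j k : Fin d) :
    pderiv j (s k) = pderiv k (s j) := by
  by_contra hne
  set c := pderiv j (s k) - pderiv k (s j) with hc
  have hc0 : c ≠ 0 := sub_ne_zero.2 hne
  -- For `m = 0` the projections are constants and the curl vanishes; excluding this case makes
  -- the subtraction `m - 1` below exact.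
  have hm : 1 ≤ m := by
    by_contra hm
    have h0 : ∀ i l, pderiv i (s l) = 0 := fun i l => by
      by_contra h
      have := totalDegree_pderiv_lt i (s l) h
      have := hs l
      omega
    exact hc0 (by rw [hc, h0, h0, sub_zero])
  have hcd : c.totalDegree ≤ m - 1 := by
    refine (totalDegree_sub _ _).trans (max_le ?_ ?_) <;>
      exact (totalDegree_pderiv_le _ _).trans (Nat.sub_le_sub_right (hs _) 1)
  have hadj : ∀ i, (adj α i c).totalDegree ≤ m := fun i => by
    have := totalDegree_adj_le α i c
    omega
  have hortho : ∀ i l, wInt hd hα (ballPoly d * (pderiv i (pderiv l p - s l) * c)) = 0 :=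
    fun i l => by
      rw [wInt_pderiv, sub_mul, map_sub, hproj l _ (hadj i), sub_self, neg_zero]
  have hc' : c = pderiv k (pderiv j p - s j) - pderiv j (pderiv k p - s k) := by
    rw [hc, map_sub, map_sub, pderiv_pderiv_comm k j]
    ring
  refine hc0 (eq_zero_of_wInt_ballPoly_mul_sq hd hα c ?_)
  nth_rewrite 1 [hc']
  rw [sub_mul, mul_sub, map_sub, hortho, hortho, sub_zero]

/-- Derivatives of Sobolev orthogonal polynomials are Lebesgue orthogonal polynomials:
`∂_k 𝒱^{α,1}_n ⊆ 𝒱^α_{n−1}`. -/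
theorem stmt15 {d : ℕ} (hd : 1 ≤ d) (α : ℝ) (hα : -1 < α) (n : ℕ)
    (p : MvPolynomial (Fin d) ℝ) (hdeg : p.totalDegree ≤ n)
    (horth : ∀ q : MvPolynomial (Fin d) ℝ, q.totalDegree < n → sobIP α p q = 0)
    (k : Fin d) :
    (MvPolynomial.pderiv k p).totalDegree ≤ n - 1 ∧
    ∀ q : MvPolynomial (Fin d) ℝ, q.totalDegree < n - 1 →
      lebIP α (MvPolynomial.pderiv k p) q = 0 := by
  refine ⟨(totalDegree_pderiv_le k p).trans (Nat.sub_le_sub_right hdeg 1), fun q hq => ?_⟩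
  obtain ⟨m, rfl⟩ : ∃ m, n = m + 2 := ⟨n - 2, by omega⟩
  simp only [sobIP, lebIP_eq_wInt hd hα] at horth ⊢
  choose s hs hproj using fun i => exists_proj hd hα m (pderiv i p)
  obtain ⟨σ, hσd, hσ⟩ := exists_potential m s hs (curl_proj hd hα m p s hs hproj)
  have hp1 : wInt hd hα (p * 1) = 0 := by
    have h11 : wInt hd hα ((1 : MvPolynomial (Fin d) ℝ) * 1) ≠ 0 := fun h =>
      one_ne_zero (eq_zero_of_wInt_sq hd hα 1 h)
    have := horth 1 (by simp)
    simp only [pderiv_one, mul_zero, map_zero, Finset.sum_const_zero, zero_add] at this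
    rwa [mul_div_cancel_right₀ _ h11] at this
  have hsum := horth σ (by omega)
  rw [hp1, zero_mul, zero_div, add_zero] at hsum
  simp only [hσ, fun i => hproj i (s i) (hs i)] at hsum
  have hnn : ∀ P : MvPolynomial (Fin d) ℝ, 0 ≤ wInt hd hα (P * P) := fun P =>
    setIntegral_nonneg Metric.isOpen_ball.measurableSet fun x hx => by
      rw [mem_ball_zero_iff] at hx
      rw [map_mul]
      exact mul_nonneg (mul_self_nonneg _)
        (Real.rpow_nonneg (by nlinarith [norm_nonneg x]) _)
  have hk := (Finset.sum_eq_zero_iff_of_nonneg fun i _ => hnn (s i)).1 hsum k (Finset.mem_univ k)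
  rw [hproj k q (by omega), eq_zero_of_wInt_sq hd hα _ hk, zero_mul, map_zero]
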